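/- For the sequence (a_k) from Example 1, there exist constants c₁, c₂ > 0 such that c₁ ln a_k ≤ a_{k+1} - a_k ≤ c₂ ln a_k for all sufficiently large k. -/

import Mathlib

/-!
The difference `a (k + 1) - a k` is `2 * p` throughout the block `2 ^ p ≤ k < 2 ^ (p + 1)`, the
recurrence at `k = 2 ^ (p + 1)` merely raising the previous difference by `2`. Hence it equals
`2 * Nat.log 2 k`, which has the order of `log k`. Differences between `1` and `2 * k + 1` force
`k ≤ a k ≤ k ^ 2`, so `log k` and `log (a k)` agree up to a factor `2`.
-/

theorem le_of_forall_succ_sub_le {G : Type*} [AddCommGroup G] [PartialOrder G]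
    [IsOrderedAddMonoid G] {f u : ℕ → G} {m : ℕ} (hm : f m ≤ u m)
    (h : ∀ k, m ≤ k → f (k + 1) - f k ≤ u (k + 1) - u k) {k : ℕ} (hk : m ≤ k) : f k ≤ u k := by
  induction k, hk using Nat.le_induction with
  | base => exact hm
  | succ k hk ih => simpa only [sub_add_cancel] using add_le_add (h k hk) ih

theorem natCast_le_of_one_le_succ_sub {R : Type*} [Ring R] [PartialOrder R] [IsOrderedRing R]
    {u : ℕ → R} {m : ℕ} (hm : m ≤ u m) (h : ∀ k, m ≤ k → 1 ≤ u (k + 1) - u k) {k : ℕ}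
    (hk : m ≤ k) : k ≤ u k :=
  le_of_forall_succ_sub_le (f := fun j ↦ (j : R)) hm
    (fun j hj ↦ by simpa only [Nat.cast_succ, add_sub_cancel_left] using h j hj) hk

theorem le_sq_of_succ_sub_le {R : Type*} [Ring R] [PartialOrder R] [IsOrderedRing R]
    {u : ℕ → R} {m : ℕ} (hm : u m ≤ (m : R) ^ 2)
    (h : ∀ k, m ≤ k → u (k + 1) - u k ≤ 2 * k + 1) {k : ℕ} (hk : m ≤ k) : u k ≤ (k : R) ^ 2 := by
  refine le_of_forall_succ_sub_le (u := fun j ↦ (j : R) ^ 2) hm (fun j hj ↦ ?_) hk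
  have hsq : ((j + 1 : ℕ) : R) ^ 2 - (j : R) ^ 2 = 2 * j + 1 := by
    push_cast
    noncomm_ring
  exact hsq ▸ h j hj

theorem natLog_le_logb_of_le {b k : ℕ} {x : ℝ} (hb : 1 < b) (hk : 0 < k) (hkx : k ≤ x) :
    Nat.log b k ≤ Real.logb b x :=
  (Real.natLog_le_logb k b).trans <|
    Real.logb_le_logb_of_le (mod_cast hb) (mod_cast hk) hkx

theorem logb_le_two_mul_natLog {b k : ℕ} (hb : 1 < b) (hk : b ≤ k) :
    Real.logb b k ≤ 2 * Nat.log b k := by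
  have hlt : Real.logb b k < Nat.log b k + 1 := by
    rw [← Real.natFloor_logb_natCast]
    exact Nat.lt_floor_add_one _
  have hlog : (1 : ℝ) ≤ Nat.log b k := mod_cast Nat.log_pos hb hk
  linarith

theorem logb_le_four_mul_natLog_of_le_sq {b k : ℕ} {x : ℝ} (hb : 1 < b) (hk : b ≤ k)
    (hx : 0 < x) (hxk : x ≤ (k : ℝ) ^ 2) : Real.logb b x ≤ 4 * Nat.log b k :=
  calc Real.logb b x ≤ Real.logb b ((k : ℝ) ^ 2) :=
        Real.logb_le_logb_of_le (mod_cast hb) hx hxk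
    _ = 2 * Real.logb b k := mod_cast Real.logb_pow b k 2
    _ ≤ 2 * (2 * Nat.log b k) := by gcongr; exact logb_le_two_mul_natLog hb hk
    _ = 4 * Nat.log b k := by ring

theorem natCast_le_of_succ_sub_eq_two_mul_natLog {u : ℕ → ℝ} (htwo : 2 ≤ u 2)
    (hu : ∀ k, 2 ≤ k → u (k + 1) - u k = 2 * Nat.log 2 k) {k : ℕ} (hk : 2 ≤ k) : k ≤ u k := by
  refine natCast_le_of_one_le_succ_sub (m := 2) (mod_cast htwo) (fun j hj ↦ ?_) hk
  have hlog : (1 : ℝ) ≤ Nat.log 2 j := mod_cast Nat.log_pos one_lt_two hj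
  rw [hu j hj]
  linarith

theorem le_sq_of_succ_sub_eq_two_mul_natLog {u : ℕ → ℝ} (htwo : u 2 ≤ 4)
    (hu : ∀ k, 2 ≤ k → u (k + 1) - u k = 2 * Nat.log 2 k) {k : ℕ} (hk : 2 ≤ k) :
    u k ≤ (k : ℝ) ^ 2 := by
  refine le_sq_of_succ_sub_le (m := 2) (htwo.trans_eq (by norm_num)) (fun j hj ↦ ?_) hk
  have hlog : (Nat.log 2 j : ℝ) ≤ j := mod_cast Nat.log_le_self 2 j
  rw [hu j hj]
  linarith

/-- The recurrence of Example 1 from index `2` on, with the initial values entering only through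
`a 3 = a 2 + 2`. The subtraction in `two_pow` is truncated; this does no harm, since `between`
makes `a (2 ^ p - 1) ≤ a (2 ^ p)` for `2 ≤ p`. -/
structure DyadicRecurrence (a : ℕ → ℕ) : Prop where
  three : a 3 = a 2 + 2
  between : ∀ p k : ℕ, 1 ≤ p → 2 ^ p < k → k < 2 ^ (p + 1) → a (k + 1) = a k + 2 * p
  two_pow : ∀ p : ℕ, 2 ≤ p → a (2 ^ p + 1) = a (2 ^ p) + (a (2 ^ p) - a (2 ^ p - 1)) + 2

namespace DyadicRecurrence

variable {a : ℕ → ℕ}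

theorem apply_two_pow_add_one (ha : DyadicRecurrence a) {p : ℕ} (hp : 1 ≤ p) :
    a (2 ^ p + 1) = a (2 ^ p) + 2 * p := by
  obtain ⟨q, rfl⟩ := Nat.exists_eq_add_of_le' hp
  rcases q.eq_zero_or_pos with rfl | hq
  · exact ha.three
  have htwo_le : 2 ≤ 2 ^ q := Nat.le_self_pow hq.ne' 2
  have hprev : a (2 ^ (q + 1)) = a (2 ^ (q + 1) - 1) + 2 * q := by
    have := ha.between q (2 ^ (q + 1) - 1) hq (by lia) (by lia)
    rwa [Nat.sub_add_cancel Nat.one_le_two_pow] at this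
  have hnext := ha.two_pow (q + 1) (by lia)
  lia

theorem apply_add_one (ha : DyadicRecurrence a) {k : ℕ} (hk : 2 ≤ k) :
    a (k + 1) = a k + 2 * Nat.log 2 k := by
  have hlog_pos : 1 ≤ Nat.log 2 k := Nat.log_pos one_lt_two hk
  rcases (Nat.pow_log_le_self 2 (by lia : k ≠ 0)).eq_or_lt with heq | hlt
  · simpa only [heq] using ha.apply_two_pow_add_one hlog_pos
  · exact ha.between _ k hlog_pos hlt (Nat.lt_pow_succ_log_self one_lt_two k)

end DyadicRecurrence

/-- For the sequence of Example 1 there are constants `c₁, c₂ > 0` with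
`c₁ ln a_k ≤ a_{k+1} - a_k ≤ c₂ ln a_k` for all sufficiently large `k`. -/
theorem stmt9 (a : ℕ → ℕ)
    (h1 : a 1 = 1) (h2 : a 2 = 3) (h3 : a 3 = 5)
    (hmid : ∀ p k : ℕ, 1 ≤ p → 2 ^ p < k → k < 2 ^ (p + 1) →
      a (k + 1) = a k + 2 * p)
    (hpow : ∀ p : ℕ, 2 ≤ p →
      a (2 ^ p + 1) = a (2 ^ p) + (a (2 ^ p) - a (2 ^ p - 1)) + 2) :
    ∃ c₁ c₂ : ℝ, 0 < c₁ ∧ 0 < c₂ ∧ ∃ N : ℕ, ∀ k ≥ N,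
      c₁ * Real.log (a k) ≤ (a (k + 1) : ℝ) - (a k : ℝ) ∧
      (a (k + 1) : ℝ) - (a k : ℝ) ≤ c₂ * Real.log (a k) := by
  have ha : DyadicRecurrence a := ⟨by rw [h3, h2], hmid, hpow⟩
  have hstep (k : ℕ) (hk : 2 ≤ k) : (a (k + 1) : ℝ) - a k = 2 * Nat.log 2 k := by
    rw [ha.apply_add_one hk]
    push_cast
    ring
  refine ⟨1 / 2 / Real.log 2, 2 / Real.log 2, by positivity, by positivity, 2, fun k hk ↦ ?_⟩
  have hlower : (k : ℝ) ≤ a k :=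
    natCast_le_of_succ_sub_eq_two_mul_natLog (u := fun j ↦ a j) (by norm_num [h2]) hstep hk
  have hupper : (a k : ℝ) ≤ (k : ℝ) ^ 2 :=
    le_sq_of_succ_sub_eq_two_mul_natLog (u := fun j ↦ a j) (by norm_num [h2]) hstep hk
  have hak : (0 : ℝ) < a k := (Nat.cast_pos.2 (by lia)).trans_le hlower
  have hlogb_le := logb_le_four_mul_natLog_of_le_sq one_lt_two hk hak hupper
  have hle_logb := natLog_le_logb_of_le one_lt_two (by lia) hlower
  rw [Nat.cast_ofNat, Real.logb] at hlogb_le hle_logb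
  rw [hstep k hk, mul_comm_div (1 / 2), mul_comm_div 2]
  constructor <;> linarith
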